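/- arXiv:2602.14987 — 5 statements merged into one kernel-verified Lean document; each statement's English description precedes it below -/
import Mathlib

section
/- Let S and Z be finite nonempty types, n : ℕ, τ : Fin (n+1) → Z a trace, O : S → Z → ℝ with 0 ≤ O s z, and ρ : (Fin (n+1) → S) → ℝ with 0 ≤ ρ π ≤ 1 for all π. Let (ι₀, P₀) be a stochastic pair with 0 < ∑_π w_{ι₀,P₀}(π). Let ιl_m, ιu_m : S → ℝ and Pl_m, Pu_m : S → S → ℝ (m ∈ ℕ) be sequences of interval bounds such that for all m: ιl_m s ≤ ι₀ s ≤ ιu_m s and Pl_m s s' ≤ P₀ s s' ≤ Pu_m s s' for all s, s', and such that ιl_m s → ι₀ s, ιu_m s → ι₀ s, Pl_m s s' → P₀ s s', and Pu_m s s' → P₀ s s' as m → ∞. Define the interval-HMM monitor value M_m = sSup { R_{ι,P}(τ) | (ι,P) stochastic, ιl_m s ≤ ι s ≤ ιu_m s for all s, Pl_m s s' ≤ P s s' ≤ Pu_m s s' for all s, s', and 0 < ∑_π w_{ι,P}(π) }. Then M_m → R_{ι₀,P₀}(τ) as m → ∞; that is, as the learned probability intervals converge to the true transition probabilities, the induced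 cautious monitors converge to the ideal monitor on every trace of positive probability. -/
open Finset Filter

/-- The weight of a path `π` in an HMM with initial distribution `ι`,
transition matrix `P`, and observation kernel `O`, given a trace `τ`. -/
noncomputable def pathWeight {S Z : Type*} [Fintype S] {n : ℕ}
    (τ : Fin (n + 1) → Z) (O : S → Z → ℝ) (ι : S → ℝ) (P : S → S → ℝ)
    (π : Fin (n + 1) → S) : ℝ :=
  ι (π 0) * (∏ i : Fin n, P (π i.castSucc) (π i.succ)) *
    ∏ i : Fin (n + 1), O (π i) (τ i)

/-- The conditional expected risk of a trace `τ`. -/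
noncomputable def condRisk {S Z : Type*} [Fintype S] {n : ℕ}
    (τ : Fin (n + 1) → Z) (O : S → Z → ℝ) (ρ : (Fin (n + 1) → S) → ℝ)
    (ι : S → ℝ) (P : S → S → ℝ) : ℝ :=
  (∑ π : Fin (n + 1) → S, pathWeight τ O ι P π * ρ π) /
    ∑ π : Fin (n + 1) → S, pathWeight τ O ι P π

/-- The pair `(ι, P)` is stochastic. -/
def Stochastic {S : Type*} [Fintype S] (ι : S → ℝ) (P : S → S → ℝ) : Prop :=
  (∀ s, 0 ≤ ι s) ∧ (∀ s s', 0 ≤ P s s') ∧ (∑ s, ι s = 1) ∧ ∀ s, ∑ s', P s s' = 1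

/-- As the learned probability intervals converge to the true transition
probabilities, the induced cautious (interval-HMM) monitors converge to the
ideal monitor on every trace of positive probability. -/
theorem ihmm_monitor_tendsto_ideal
    {S Z : Type*} [Fintype S] [Nonempty S] [Fintype Z] [Nonempty Z]
    (n : ℕ) (τ : Fin (n + 1) → Z) (O : S → Z → ℝ) (hO : ∀ s z, 0 ≤ O s z)
    (ρ : (Fin (n + 1) → S) → ℝ) (hρ : ∀ π, 0 ≤ ρ π ∧ ρ π ≤ 1)
    (ι₀ : S → ℝ) (P₀ : S → S → ℝ) (h₀ : Stochastic ι₀ P₀)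
    (hpos : 0 < ∑ π : Fin (n + 1) → S, pathWeight τ O ι₀ P₀ π)
    (ιl ιu : ℕ → S → ℝ) (Pl Pu : ℕ → S → S → ℝ)
    (hι₀ : ∀ m s, ιl m s ≤ ι₀ s ∧ ι₀ s ≤ ιu m s)
    (hP₀ : ∀ m s s', Pl m s s' ≤ P₀ s s' ∧ P₀ s s' ≤ Pu m s s')
    (hιl : ∀ s, Tendsto (fun m => ιl m s) atTop (nhds (ι₀ s)))
    (hιu : ∀ s, Tendsto (fun m => ιu m s) atTop (nhds (ι₀ s)))
    (hPl : ∀ s s', Tendsto (fun m => Pl m s s') atTop (nhds (P₀ s s')))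
    (hPu : ∀ s s', Tendsto (fun m => Pu m s s') atTop (nhds (P₀ s s'))) :
    Tendsto (fun m =>
        sSup {x : ℝ | ∃ ι P, Stochastic ι P ∧
          (∀ s, ιl m s ≤ ι s ∧ ι s ≤ ιu m s) ∧
          (∀ s s', Pl m s s' ≤ P s s' ∧ P s s' ≤ Pu m s s') ∧
          (0 < ∑ π : Fin (n + 1) → S, pathWeight τ O ι P π) ∧
          x = condRisk τ O ρ ι P})
      atTop (nhds (condRisk τ O ρ ι₀ P₀)) := by
  have hw : ∀ π : Fin (n + 1) → S, Continuous
      (fun q : (S → ℝ) × (S → S → ℝ) => pathWeight τ O q.1 q.2 π) := by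
    intro π
    unfold pathWeight
    fun_prop
  have hcont : ContinuousAt
      (fun q : (S → ℝ) × (S → S → ℝ) => condRisk τ O ρ q.1 q.2) (ι₀, P₀) := by
    unfold condRisk
    refine ContinuousAt.div ?_ ?_ hpos.ne'
    · exact (continuous_finsetSum _ fun π _ => (hw π).mul continuous_const).continuousAt
    · exact (continuous_finsetSum _ fun π _ => hw π).continuousAt
  rw [Metric.tendsto_nhds]
  intro ε hε
  obtain ⟨δ, hδ, hball⟩ := Metric.continuousAt_iff.1 hcont (ε / 2) (half_pos hε)
  have e1 : ∀ᶠ m in atTop, ∀ s, dist (ιl m s) (ι₀ s) < δ :=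
    eventually_all.2 fun s => Metric.tendsto_nhds.1 (hιl s) δ hδ
  have e2 : ∀ᶠ m in atTop, ∀ s, dist (ιu m s) (ι₀ s) < δ :=
    eventually_all.2 fun s => Metric.tendsto_nhds.1 (hιu s) δ hδ
  have e3 : ∀ᶠ m in atTop, ∀ s s', dist (Pl m s s') (P₀ s s') < δ :=
    eventually_all.2 fun s => eventually_all.2 fun s' => Metric.tendsto_nhds.1 (hPl s s') δ hδ
  have e4 : ∀ᶠ m in atTop, ∀ s s', dist (Pu m s s') (P₀ s s') < δ :=
    eventually_all.2 fun s => eventually_all.2 fun s' => Metric.tendsto_nhds.1 (hPu s s') δ hδ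
  filter_upwards [e1, e2, e3, e4] with m h1 h2 h3 h4
  have key : ∀ a b c x : ℝ, dist a x < δ → dist b x < δ → a ≤ c → c ≤ b → dist c x < δ := by
    intro a b c x ha hb hac hcb
    rw [Real.dist_eq, abs_lt] at *
    constructor <;> linarith [ha.1, ha.2, hb.1, hb.2]
  set A := {x : ℝ | ∃ ι P, Stochastic ι P ∧
          (∀ s, ιl m s ≤ ι s ∧ ι s ≤ ιu m s) ∧
          (∀ s s', Pl m s s' ≤ P s s' ∧ P s s' ≤ Pu m s s') ∧
          (0 < ∑ π : Fin (n + 1) → S, pathWeight τ O ι P π) ∧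
          x = condRisk τ O ρ ι P} with hA
  have hmem : condRisk τ O ρ ι₀ P₀ ∈ A := ⟨ι₀, P₀, h₀, hι₀ m, hP₀ m, hpos, rfl⟩
  have hub : ∀ x ∈ A, x ≤ condRisk τ O ρ ι₀ P₀ + ε / 2 := by
    rintro x ⟨ι, P, -, hι, hP, -, rfl⟩
    have hd : dist (ι, P) (ι₀, P₀) < δ := by
      rw [Prod.dist_eq]
      refine max_lt ((dist_pi_lt_iff hδ).2 fun s => ?_)
        ((dist_pi_lt_iff hδ).2 fun s => (dist_pi_lt_iff hδ).2 fun s' => ?_)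
      · exact key _ _ _ _ (h1 s) (h2 s) (hι s).1 (hι s).2
      · exact key _ _ _ _ (h3 s s') (h4 s s') (hP s s').1 (hP s s').2
    have h := hball hd
    rw [Real.dist_eq, abs_lt] at h
    linarith [h.2]
  have hle : sSup A ≤ condRisk τ O ρ ι₀ P₀ + ε / 2 := csSup_le ⟨_, hmem⟩ hub
  have hge : condRisk τ O ρ ι₀ P₀ ≤ sSup A := le_csSup ⟨_, hub⟩ hmem
  rw [Real.dist_eq, abs_lt]
  constructor <;> linarith
end

section
/- Let l, u ∈ ℝ with 0 ≤ l ≤ u ≤ 1, strengths n↓, n↑ ∈ ℝ with 0 ≤ n↓ ≤ n↑, and k, N ∈ ℝ with N > 0 and 0 ≤ k ≤ N. Define the updated interval endpoints by l' = (n↑·l + k)/(n↑ + N) if l ≤ k/N and l' = (n↓·l + k)/(n↓ + N) otherwise, and u' = (n↑·u + k)/(n↑ + N) if k/N ≤ u and u' = (n↓·u + k)/(n↓ + N) otherwise. Then 0 ≤ l' ≤ u' ≤ 1; that is, the LUI update rule with case-dependent strengths always produces valid probability intervals. -/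
/-- The LUI update rule with case-dependent strengths always produces valid
probability intervals. -/
theorem lui_update_valid_interval (l u nlo nup k N : ℝ)
    (hl0 : 0 ≤ l) (hlu : l ≤ u) (hu1 : u ≤ 1)
    (hnlo : 0 ≤ nlo) (hn : nlo ≤ nup) (hN : 0 < N) (hk0 : 0 ≤ k) (hkN : k ≤ N) :
    0 ≤ (if l ≤ k / N then (nup * l + k) / (nup + N) else (nlo * l + k) / (nlo + N)) ∧
      (if l ≤ k / N then (nup * l + k) / (nup + N) else (nlo * l + k) / (nlo + N)) ≤
        (if k / N ≤ u then (nup * u + k) / (nup + N) else (nlo * u + k) / (nlo + N)) ∧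
      (if k / N ≤ u then (nup * u + k) / (nup + N) else (nlo * u + k) / (nlo + N)) ≤ 1 := by
  have hup : 0 ≤ nup := hnlo.trans hn
  have nonneg : ∀ n : ℝ, 0 ≤ n → 0 ≤ (n * l + k) / (n + N) := fun n h => by positivity
  have leone : ∀ n : ℝ, 0 ≤ n → (n * u + k) / (n + N) ≤ 1 := fun n h => by
    rw [div_le_one (by linarith)]
    nlinarith [mul_nonneg h (sub_nonneg.2 hu1)]
  have mono : ∀ n : ℝ, 0 ≤ n → (n * l + k) / (n + N) ≤ (n * u + k) / (n + N) :=
    fun n h => by gcongr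
  refine ⟨?_, ?_, ?_⟩
  · split_ifs
    exacts [nonneg _ hup, nonneg _ hnlo]
  · split_ifs with h1 h2 h2
    · exact mono _ hup
    · refine (mono _ hup).trans ?_
      rw [not_le, lt_div_iff₀ hN] at h2
      rw [div_le_div_iff₀ (by linarith) (by linarith)]
      nlinarith [mul_nonneg (sub_nonneg.2 hn) (sub_nonneg.2 h2.le)]
    · refine le_trans ?_ (mono _ hup)
      rw [not_le, div_lt_iff₀ hN] at h1
      rw [div_le_div_iff₀ (by linarith) (by linarith)]
      nlinarith [mul_nonneg (sub_nonneg.2 hn) (sub_nonneg.2 h1.le)]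
    · exact mono _ hnlo
  · split_ifs
    exacts [leone _ hup, leone _ hnlo]
end

section
/- Let n₀ > 0, x₀ ∈ ℝ, N, k : ℕ → ℝ with N_j > 0 for all j, and p ∈ ℝ. Define n_{j+1} = n_j + N_j and x_{j+1} = (n_j·x_j + k_j)/(n_j + N_j), and set S_K = ∑_{j<K} N_j and T_K = ∑_{j<K} k_j. If S_K → ∞ and T_K / S_K → p as K → ∞, then x_K → p; that is, the LUI estimate converges to the true probability whenever the cumulative empirical frequency does, regardless of the initial estimate, the initial strength, and how many samples are processed per iteration. -/
open Finset Filter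

/-- The LUI estimate converges to the true probability whenever the cumulative
empirical frequency does, regardless of the initial estimate, the initial
strength, and how many samples are processed per iteration. -/
theorem lui_tendsto (n x N k : ℕ → ℝ) (hn0 : 0 < n 0)
    (hN : ∀ j, 0 < N j)
    (hrecn : ∀ j, n (j + 1) = n j + N j)
    (hrecx : ∀ j, x (j + 1) = (n j * x j + k j) / (n j + N j))
    (p : ℝ)
    (hS : Tendsto (fun K => ∑ j ∈ Finset.range K, N j) atTop atTop)
    (hT : Tendsto
      (fun K => (∑ j ∈ Finset.range K, k j) / (∑ j ∈ Finset.range K, N j))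
      atTop (nhds p)) :
    Tendsto x atTop (nhds p) := by
  have hn : ∀ K, n K = n 0 + ∑ j ∈ Finset.range K, N j := by
    intro K
    induction K with
    | zero => simp
    | succ K ih => rw [hrecn, Finset.sum_range_succ, ih]; ring
  have hS0 : ∀ K, 0 ≤ ∑ j ∈ Finset.range K, N j :=
    fun K => Finset.sum_nonneg fun j _ => (hN j).le
  have hpos : ∀ K, 0 < n K := by
    intro K
    rw [hn]
    linarith [hS0 K]
  have hx : ∀ K, n K * x K = n 0 * x 0 + ∑ j ∈ Finset.range K, k j := by
    intro K
    induction K with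
    | zero => simp
    | succ K ih =>
      have h1 : n K + N K ≠ 0 := (add_pos (hpos K) (hN K)).ne'
      rw [hrecx, hrecn, Finset.sum_range_succ, mul_div_cancel₀ _ h1, ih]
      ring
  have hA := (hS.const_div_atTop (n 0 * x 0)).add hT
  have hB := (hS.const_div_atTop (n 0)).add_const 1
  have hC := hA.div hB (by norm_num)
  simp only [zero_add, div_one] at hC
  refine hC.congr' ?_
  filter_upwards [hS.eventually_gt_atTop 0] with K hK
  have h2 := hx K
  have h3 := hpos K
  rw [hn] at h2 h3
  simp only [Pi.div_apply]
  rw [← add_div, ← h2, div_add_one hK.ne', div_div_div_cancel_right₀ hK.ne']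
  exact mul_div_cancel_left₀ _ h3.ne'
end

section
/- Let N, k : ℕ → ℝ with N_j > 0 and 0 ≤ k_j ≤ N_j for all j, set S_K = ∑_{j<K} N_j and T_K = ∑_{j<K} k_j, and let p ∈ [0,1]. Let c, C ∈ ℝ with 0 < c ≤ C, and let m : ℕ → ℝ be any sequence of strengths satisfying c + S_j ≤ m_j ≤ C + S_j for all j. Define x₀ ∈ ℝ and x_{j+1} = (m_j·x_j + k_j)/(m_j + N_j). If S_K → ∞ and T_K / S_K → p as K → ∞, then x_K → p; that is, the LUI estimate converges to the true probability even when each update uses a strength chosen anywhere within the current strength interval, whose endpoints differ from the cumulative sample count by bounded offsets. -/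
open Finset Filter

/-- The LUI estimate converges to the true probability even when each update
uses a strength chosen anywhere within the current strength interval, whose
endpoints differ from the cumulative sample count by bounded offsets. -/
theorem lui_tendsto_varying_strength (N k : ℕ → ℝ)
    (hN : ∀ j, 0 < N j) (hk : ∀ j, 0 ≤ k j ∧ k j ≤ N j)
    (p : ℝ) (hp : p ∈ Set.Icc (0 : ℝ) 1)
    (c C : ℝ) (hc : 0 < c) (hcC : c ≤ C)
    (m : ℕ → ℝ)
    (hm : ∀ j, c + ∑ i ∈ Finset.range j, N i ≤ m j ∧
      m j ≤ C + ∑ i ∈ Finset.range j, N i)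
    (x : ℕ → ℝ)
    (hrecx : ∀ j, x (j + 1) = (m j * x j + k j) / (m j + N j))
    (hS : Tendsto (fun K => ∑ j ∈ Finset.range K, N j) atTop atTop)
    (hT : Tendsto
      (fun K => (∑ j ∈ Finset.range K, k j) / (∑ j ∈ Finset.range K, N j))
      atTop (nhds p)) :
    Tendsto x atTop (nhds p) := by
  obtain ⟨S, hSd⟩ : ∃ S : ℕ → ℝ, S = fun K => ∑ j ∈ Finset.range K, N j := ⟨_, rfl⟩
  obtain ⟨T, hTd⟩ : ∃ T : ℕ → ℝ, T = fun K => ∑ j ∈ Finset.range K, k j := ⟨_, rfl⟩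
  have hS0 : S 0 = 0 := by simp [hSd]
  have hT0 : T 0 = 0 := by simp [hTd]
  have hSs : ∀ j, S (j + 1) = S j + N j := fun j => by simp [hSd, Finset.sum_range_succ]
  have hTs : ∀ j, T (j + 1) = T j + k j := fun j => by simp [hTd, Finset.sum_range_succ]
  have hm' : ∀ j, c + S j ≤ m j ∧ m j ≤ C + S j := fun j => by simpa [hSd] using hm j
  have hSn : ∀ j, 0 ≤ S j := fun j => by
    rw [hSd]; exact Finset.sum_nonneg (fun i _ => (hN i).le)
  have hS' : Tendsto S atTop atTop := by rw [hSd]; exact hS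
  have hT' : Tendsto (fun K => T K / S K) atTop (nhds p) := by rw [hSd, hTd]; exact hT
  have hmpos : ∀ j, 0 < m j := fun j => by linarith [(hm' j).1, hSn j]
  have hrec : ∀ j, (m j + N j) * x (j + 1) = m j * x j + k j := fun j => by
    have : m j + N j ≠ 0 := (add_pos (hmpos j) (hN j)).ne'
    rw [hrecx j]; field_simp
  obtain ⟨M, hMd⟩ : ∃ M : ℝ, M = max |x 0| 1 := ⟨_, rfl⟩
  have hM1 : 1 ≤ M := hMd ▸ le_max_right _ _
  have hx : ∀ j, |x j| ≤ M := by
    intro j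
    induction j with
    | zero => exact hMd ▸ le_max_left _ _
    | succ j ih =>
      have hpos : 0 < m j + N j := by linarith [hmpos j, hN j]
      rw [abs_le] at ih ⊢
      have h1 := mul_le_mul_of_nonneg_left ih.1 (hmpos j).le
      have h2 := mul_le_mul_of_nonneg_left ih.2 (hmpos j).le
      have h3 : N j * 1 ≤ N j * M := mul_le_mul_of_nonneg_left hM1 (hN j).le
      have h4 := hrec j
      have h5 := hk j
      constructor
      · refine le_of_mul_le_mul_left ?_ hpos
        nlinarith
      · refine le_of_mul_le_mul_left ?_ hpos
        nlinarith
  have hC : 0 < C := by linarith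
  have hD : ∀ j, |S j * x j - T j| ≤ C * (M + 1) * (Real.log (c + S j) - Real.log c) := by
    intro j
    induction j with
    | zero => simp [hS0, hT0]
    | succ j ih =>
      have hA : 0 < c + S j := by linarith [hSn j]
      have hB : 0 < c + S (j + 1) := by linarith [hSn (j + 1)]
      have hNj := hN j
      have hmj := hm' j
      have hpos : 0 < m j + N j := by linarith [hmpos j]
      have hlog : N j / (c + S (j + 1)) ≤ Real.log (c + S (j + 1)) - Real.log (c + S j) := by
        have h := Real.log_le_sub_one_of_pos (div_pos hA hB)
        rw [Real.log_div hA.ne' hB.ne'] at h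
        have : (c + S j) / (c + S (j + 1)) = 1 - N j / (c + S (j + 1)) := by
          rw [hSs] at hB ⊢
          field_simp
          ring
        linarith
      have hdiff : |x j - x (j + 1)| ≤ (M + 1) * (N j / (c + S (j + 1))) := by
        have e : x j - x (j + 1) = (N j * x j - k j) / (m j + N j) := by
          rw [eq_div_iff hpos.ne']; linarith [hrec j]
        rw [e, abs_div, abs_of_pos hpos, ← mul_div_assoc]
        have hnum : |N j * x j - k j| ≤ (M + 1) * N j := by
          have := abs_le.1 (hx j)
          have h1 := mul_le_mul_of_nonneg_left this.1 hNj.le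
          have h2 := mul_le_mul_of_nonneg_left this.2 hNj.le
          have h5 := hk j
          rw [abs_le]
          constructor <;> nlinarith
        have hden : c + S (j + 1) ≤ m j + N j := by rw [hSs]; linarith
        exact div_le_div₀ (by positivity) hnum hB hden
      have estep : S (j + 1) * x (j + 1) - T (j + 1)
          = (S j * x j - T j) + (m j - S j) * (x j - x (j + 1)) := by
        rw [hSs, hTs]; linarith [hrec j]
      have ha : |m j - S j| ≤ C := by rw [abs_le]; constructor <;> linarith
      rw [estep]
      calc _ ≤ |S j * x j - T j| + |(m j - S j) * (x j - x (j + 1))| := abs_add_le _ _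
        _ ≤ C * (M + 1) * (Real.log (c + S j) - Real.log c)
            + C * ((M + 1) * (Real.log (c + S (j + 1)) - Real.log (c + S j))) := by
          rw [abs_mul]
          refine add_le_add ih (mul_le_mul ha (hdiff.trans ?_) (abs_nonneg _) hC.le)
          exact mul_le_mul_of_nonneg_left hlog (by linarith)
        _ = _ := by ring
  have hlim : Tendsto (fun j => C * (M + 1) * ((Real.log 2 - Real.log c) / S j
      + Real.log (S j) / S j)) atTop (nhds 0) := by
    have h1 : Tendsto (fun j => (Real.log 2 - Real.log c) / S j) atTop (nhds 0) :=
      hS'.const_div_atTop _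
    have h2 : Tendsto (fun j => Real.log (S j) / S j) atTop (nhds 0) :=
      (Real.isLittleO_log_id_atTop.tendsto_div_nhds_zero).comp hS'
    simpa using (h1.add h2).const_mul (C * (M + 1))
  have hE : Tendsto (fun j => (S j * x j - T j) / S j) atTop (nhds 0) := by
    refine squeeze_zero_norm' ?_ hlim
    filter_upwards [hS'.eventually_ge_atTop c] with j hj
    have hSp : 0 < S j := by linarith
    have hl : Real.log (c + S j) ≤ Real.log 2 + Real.log (S j) := by
      rw [← Real.log_mul (by norm_num) hSp.ne']
      exact Real.log_le_log (by linarith) (by linarith)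
    rw [Real.norm_eq_abs, abs_div, abs_of_pos hSp, ← add_div, ← mul_div_assoc]
    refine div_le_div_of_nonneg_right ((hD j).trans ?_) hSp.le
    exact mul_le_mul_of_nonneg_left (by linarith) (by positivity)
  have hsum := hE.add hT'
  rw [zero_add] at hsum
  refine hsum.congr' ?_
  filter_upwards [hS'.eventually_gt_atTop 0] with j hj
  field_simp
  ring
end

section
/- Let S be a finite nonempty type, P : S → S → ℝ a stochastic matrix (0 ≤ P s s' for all s, s' and ∑_{s'} P s s' = 1 for every s), and B ⊆ S a set of unsafe states. Define r : ℕ → S → ℝ by r 0 s = 1 if s ∈ B and 0 otherwise, and r (h+1) s = 1 if s ∈ B and r (h+1) s = ∑_{s'} P s s' · r h s' otherwise. Then for every h ∈ ℕ and s ∈ S, r h s = ∑_{π : Fin (h+1) → S, π 0 = s, ∃ i, π i ∈ B} ∏_{i : Fin h} P (π i.castSucc) (π i.succ); that is, the backward-recursion value r h s equals the probability, over length-h trajectories of the Markov chain started in s, of visiting an unsafe state within horizon h. -/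
open Finset

theorem aux_cons_sum {S : Type*} [Fintype S] [DecidableEq S] (n : ℕ) (s : S)
    (f : (Fin (n + 1) → S) → ℝ) :
    (∑ π : Fin (n + 1) → S, if π 0 = s then f π else 0) =
      ∑ τ : Fin n → S, f (Fin.cons s τ) := by
  rw [← (Fin.consEquiv (fun _ : Fin (n + 1) => S)).sum_comp, Fintype.sum_prod_type]
  rw [Finset.sum_eq_single s]
  · simp [Fin.consEquiv]
  · intro b _ hb
    simp [Fin.consEquiv, hb]
  · simp

theorem aux_split {S : Type*} [Fintype S] [DecidableEq S] (P : S → S → ℝ) (n : ℕ) (s : S)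
    (f : (Fin (n + 1) → S) → ℝ) :
    (∑ τ : Fin (n + 1) → S, P s (τ 0) * f τ) =
      ∑ s', P s s' * ∑ τ : Fin (n + 1) → S, if τ 0 = s' then f τ else 0 := by
  simp_rw [Finset.mul_sum]
  rw [Finset.sum_comm]
  refine Finset.sum_congr rfl fun τ _ => ?_
  simp

theorem aux_prod {S : Type*} (P : S → S → ℝ) (n : ℕ) (s : S) (τ : Fin (n + 1) → S) :
    (∏ i : Fin (n + 1), P ((Fin.cons s τ : Fin (n + 2) → S) i.castSucc)
      ((Fin.cons s τ : Fin (n + 2) → S) i.succ)) =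
      P s (τ 0) * ∏ i : Fin n, P (τ i.castSucc) (τ i.succ) := by
  rw [Fin.prod_univ_succ]
  simp [← Fin.succ_castSucc]

theorem aux_total {S : Type*} [Fintype S] [DecidableEq S] (P : S → S → ℝ)
    (hstoch : ∀ s, ∑ s', P s s' = 1) (n : ℕ) : ∀ s : S,
    (∑ π : Fin (n + 1) → S, if π 0 = s then
      ∏ i : Fin n, P (π i.castSucc) (π i.succ) else 0) = 1 := by
  induction n with
  | zero => intro s; rw [aux_cons_sum]; simp
  | succ n ih =>
    intro s
    rw [aux_cons_sum]
    simp_rw [aux_prod]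
    rw [aux_split P n s (fun τ => ∏ i : Fin n, P (τ i.castSucc) (τ i.succ))]
    simp_rw [ih, mul_one, hstoch]

/-- The backward-recursion value `r h s` equals the probability, over length-`h`
trajectories of the Markov chain started in `s`, of visiting an unsafe state
within horizon `h`. -/
theorem backward_recursion_eq_path_sum
    {S : Type*} [Fintype S] [Nonempty S] [DecidableEq S]
    (P : S → S → ℝ) (hP : ∀ s s', 0 ≤ P s s') (hstoch : ∀ s, ∑ s', P s s' = 1)
    (B : Set S) [DecidablePred (· ∈ B)]
    (r : ℕ → S → ℝ)
    (hr0 : ∀ s, r 0 s = if s ∈ B then 1 else 0)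
    (hrsucc : ∀ h s, r (h + 1) s =
      if s ∈ B then 1 else ∑ s', P s s' * r h s')
    (h : ℕ) (s : S) :
    r h s = ∑ π : Fin (h + 1) → S,
      if π 0 = s ∧ ∃ i, π i ∈ B then
        ∏ i : Fin h, P (π i.castSucc) (π i.succ)
      else 0 := by
  induction h generalizing s with
  | zero =>
    simp_rw [ite_and]
    rw [aux_cons_sum, hr0]
    simp
  | succ n ih =>
    rw [hrsucc]
    split_ifs with hs
    · rw [← aux_total P hstoch (n + 1) s]
      refine Finset.sum_congr rfl fun π _ => ?_
      by_cases h0 : π 0 = s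
      · have : ∃ i, π i ∈ B := ⟨0, h0 ▸ hs⟩
        simp [h0, this]
      · simp [h0]
    · simp_rw [ih, ite_and]
      rw [aux_cons_sum]
      simp_rw [aux_prod]
      rw [← aux_split P n s (fun τ => if ∃ i, τ i ∈ B then
        ∏ i : Fin n, P (τ i.castSucc) (τ i.succ) else 0)]
      refine Finset.sum_congr rfl fun τ _ => ?_
      have : (∃ i, (Fin.cons s τ : Fin (n + 2) → S) i ∈ B) ↔ ∃ i, τ i ∈ B := by
        rw [Fin.exists_fin_succ]
        simp [hs]
      by_cases h1 : ∃ i, τ i ∈ B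
      · rw [if_pos h1, if_pos (this.2 h1)]
      · rw [if_neg h1, if_neg (fun h => h1 (this.1 h)), mul_zero]
end
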